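/- Let δ ≥ 3 be an integer, let G be a graph with minimum degree at least δ, let D ⊆ V(G), and let ω, β1, β2, β3, β4 be positive reals satisfying, with ε_i = β_i − β_{i−1} for i ∈ {2,3,4}: ω ≥ β4 ≥ β3 ≥ β2 ≥ β1 > 0, ε4 ≤ ε3 ≤ ε2 ≤ β1, and ω + (δ−2)ε3 ≥ 1/3. Suppose in the isolation residual graph G_D^ι every white vertex has at most 2 white neighbors and every blue vertex has degree at most 3. If some connected component F of the subgraph of G_D^ι induced by the white vertices is isomorphic to neither K_2 nor the 5-cycle C_5, then every minimum isolating set of F is a D-desirable set. -/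

import Mathlib

open Classical

/-- The closed neighborhood `N[D]` of a set `D` of vertices. -/
def closedNbhd {V : Type*} (G : SimpleGraph V) (D : Set V) : Set V :=
  {v | v ∈ D ∨ ∃ u ∈ D, G.Adj u v}

/-- `S` is an isolating set of `G`: deleting `N[S]` leaves no edge. -/
def IsIsolatingSet {V : Type*} (G : SimpleGraph V) (S : Set V) : Prop :=
  ∀ u v : V, G.Adj u v → u ∈ closedNbhd G S ∨ v ∈ closedNbhd G S

/-- The isolation number: the minimum cardinality of an isolating set. -/
noncomputable def isolationNumber {V : Type*} [Fintype V] (G : SimpleGraph V) : ℕ :=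
  sInf {k | ∃ S : Set V, IsIsolatingSet G S ∧ S.ncard = k}

/-- A vertex is white (w.r.t. `D`) if it lies outside `N[D]` and has a neighbor outside `N[D]`. -/
def IsWhite {V : Type*} (G : SimpleGraph V) (D : Set V) (v : V) : Prop :=
  v ∉ closedNbhd G D ∧ ∃ u, G.Adj v u ∧ u ∉ closedNbhd G D

/-- A vertex is blue (w.r.t. `D`) if it lies in `N[D]` and has a white neighbor. -/
def IsBlue {V : Type*} (G : SimpleGraph V) (D : Set V) (v : V) : Prop :=
  v ∈ closedNbhd G D ∧ ∃ u, G.Adj v u ∧ IsWhite G D u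

/-- The isolation residual graph `G_D^ι`: its edges are the edges of `G` incident
with at least one white vertex. -/
def residualGraph {V : Type*} (G : SimpleGraph V) (D : Set V) : SimpleGraph V where
  Adj u v := G.Adj u v ∧ (IsWhite G D u ∨ IsWhite G D v)
  symm := ⟨fun u v h => ⟨h.1.symm, h.2.symm⟩⟩
  loopless := ⟨fun v h => G.loopless.irrefl v h.1⟩

/-- The degree of a vertex in the isolation residual graph. -/
noncomputable def resDegree {V : Type*} (G : SimpleGraph V) (D : Set V) (v : V) : ℕ :=
  ((residualGraph G D).neighborSet v).ncard

/-- The number of white neighbors of a vertex. -/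
noncomputable def whiteNbhdCount {V : Type*} (G : SimpleGraph V) (D : Set V) (v : V) : ℕ :=
  {u | G.Adj v u ∧ IsWhite G D u}.ncard

/-- The weight of a vertex in the isolation residual graph. -/
noncomputable def vertexWeight {V : Type*} (G : SimpleGraph V) (D : Set V)
    (ω β1 β2 β3 β4 : ℝ) (v : V) : ℝ :=
  if IsWhite G D v then ω
  else if IsBlue G D v then
    if 4 ≤ resDegree G D v then β4
    else if resDegree G D v = 3 then β3
    else if resDegree G D v = 2 then β2
    else β1
  else 0

/-- The total weight `w(G_D^ι)` of the isolation residual graph. -/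
noncomputable def totalWeight {V : Type*} [Fintype V] (G : SimpleGraph V) (D : Set V)
    (ω β1 β2 β3 β4 : ℝ) : ℝ :=
  ∑ v : V, vertexWeight G D ω β1 β2 β3 β4 v

/-- `A ⊆ V(G) \ D` is `D`-desirable if the weight decrease from `D` to `D ∪ A`
is at least `|A|`. -/
def Desirable {V : Type*} [Fintype V] (G : SimpleGraph V) (ω β1 β2 β3 β4 : ℝ)
    (D A : Set V) : Prop :=
  A ⊆ Dᶜ ∧
    (A.ncard : ℝ) ≤ totalWeight G D ω β1 β2 β3 β4 - totalWeight G (D ∪ A) ω β1 β2 β3 β4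

/-- `G` is alluring w.r.t. the weights if for every `D` that is not an isolating set
there exists a `D`-desirable set. -/
def Alluring {V : Type*} [Fintype V] (G : SimpleGraph V) (ω β1 β2 β3 β4 : ℝ) : Prop :=
  ∀ D : Set V, ¬ IsIsolatingSet G D → ∃ A : Set V, Desirable G ω β1 β2 β3 β4 D A

/-- `C` is the vertex set of a connected component of the subgraph of `G_D^ι`
induced by the white vertices. -/
def IsWhiteComponent {V : Type*} (G : SimpleGraph V) (D : Set V) (C : Set V) : Prop :=
  C ⊆ {v | IsWhite G D v} ∧ (G.induce C).Connected ∧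
    ∀ u ∈ C, ∀ v : V, IsWhite G D v → G.Adj u v → v ∈ C

/-!
A connected graph of maximum degree at most two is a path or a cycle: in a longest path all inner
vertices already have two neighbors on the path, so the path is Hamiltonian and the only further
edge that can occur joins its ends. Choosing every fourth vertex shows that such a graph `F`, unless
it is `K₂` or `C₅`, has an isolating set of at most `|F| / 3` vertices.

Adding an isolating set of a white component `F` to `D` turns the vertices of `F` red and leaves all
other white vertices white. Hence each vertex of `F` releases weight `ω`, and each blue vertex with
`c` neighbors in `F` releases at least `c * (β3 - β2)`, since `β3 - β2` is the smallest of the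
increments `β1`, `β2 - β1`, `β3 - β2`. Every vertex of `F` has at least `δ - 2` blue neighbors, so
double counting the edges between `F` and the blue vertices yields a total release of at least
`|F| * (ω + (δ - 2) * (β3 - β2)) ≥ |F| / 3`.
-/

section MaxDegreeTwo

variable {W : Type*} {H : SimpleGraph W}

lemma neighborSet_eq_pair {v a b : W} (hdeg : (H.neighborSet v).encard ≤ 2)
    (ha : H.Adj v a) (hb : H.Adj v b) (hab : a ≠ b) : H.neighborSet v = {a, b} := by
  have hsub : {a, b} ⊆ H.neighborSet v := Set.insert_subset ha (Set.singleton_subset_iff.mpr hb)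
  refine ((Set.toFinite {a, b}).eq_of_subset_of_encard_le hsub ?_).symm
  rwa [Set.encard_pair hab]

lemma neighborSet_getVert_eq_pair (hdeg : ∀ v, (H.neighborSet v).encard ≤ 2) {u v : W}
    {p : H.Walk u v} (hp : p.IsPath) {i : ℕ} (hi : i + 1 < p.length) :
    H.neighborSet (p.getVert (i + 1)) = {p.getVert i, p.getVert (i + 2)} := by
  refine neighborSet_eq_pair (hdeg _) (p.adj_getVert_succ (by lia)).symm
    (p.adj_getVert_succ hi) fun heq ↦ ?_
  have := hp.getVert_injOn (show i ≤ p.length by lia) (show i + 2 ≤ p.length by lia) heq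
  lia

lemma mem_support_of_adj_start {u v w : W} {p : H.Walk u v} (hp : p.IsPath)
    (hmax : ∀ (u' v' : W) (q : H.Walk u' v'), q.IsPath → q.length ≤ p.length)
    (hadj : H.Adj u w) : w ∈ p.support := by
  by_contra hw
  have := hmax _ _ _ (hp.cons hw (h := hadj.symm))
  simp at this

lemma mem_support_of_adj_getVert (hdeg : ∀ v, (H.neighborSet v).encard ≤ 2) {u v w : W}
    {p : H.Walk u v} (hp : p.IsPath)
    (hmax : ∀ (u' v' : W) (q : H.Walk u' v'), q.IsPath → q.length ≤ p.length)
    {i : ℕ} (hi : i ≤ p.length) (hadj : H.Adj (p.getVert i) w) : w ∈ p.support := by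
  obtain rfl | hlt := hi.eq_or_lt
  · have hw : w ∈ p.reverse.support :=
      mem_support_of_adj_start hp.reverse (by simpa using hmax) (by simpa using hadj)
    simpa using hw
  obtain _ | i := i
  · exact mem_support_of_adj_start hp hmax (by simpa using hadj)
  · have hw : w ∈ H.neighborSet (p.getVert (i + 1)) := hadj
    rw [neighborSet_getVert_eq_pair hdeg hp hlt] at hw
    obtain rfl | rfl := hw <;> exact p.getVert_mem_support _

lemma exists_isHamiltonian [Finite W] (hconn : H.Connected)
    (hdeg : ∀ v, (H.neighborSet v).encard ≤ 2) :
    ∃ (u v : W) (p : H.Walk u v), p.IsHamiltonian := by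
  have := hconn.nonempty
  obtain ⟨u, v, p, hp, hmax⟩ := SimpleGraph.Walk.exists_isPath_forall_isPath_length_le_length H
  refine ⟨u, v, p, hp.isHamiltonian_of_mem fun w ↦ ?_⟩
  by_contra hw
  obtain ⟨q⟩ := hconn.preconnected u w
  obtain ⟨d, -, hfst, hsnd⟩ := q.exists_boundary_dart {x | x ∈ p.support} p.start_mem_support hw
  obtain ⟨i, hi, hle⟩ := SimpleGraph.Walk.mem_support_iff_exists_getVert.mp hfst
  exact hsnd (mem_support_of_adj_getVert hdeg hp hmax hle (hi ▸ d.adj))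

lemma eq_add_one_or_endpoints_of_adj_getVert (hdeg : ∀ v, (H.neighborSet v).encard ≤ 2) {u v : W}
    {p : H.Walk u v} (hp : p.IsPath) {i j : ℕ} (hij : i < j) (hj : j ≤ p.length)
    (hadj : H.Adj (p.getVert i) (p.getVert j)) : j = i + 1 ∨ i = 0 ∧ j = p.length := by
  have hinj {a b : ℕ} (ha : a ≤ p.length) (hb : b ≤ p.length)
      (hab : p.getVert a = p.getVert b) : a = b := hp.getVert_injOn ha hb hab
  obtain _ | i := i
  · obtain rfl | hlt := hj.eq_or_lt
    · exact .inr ⟨rfl, rfl⟩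
    obtain ⟨j, rfl⟩ : ∃ k, j = k + 1 := ⟨j - 1, by lia⟩
    have hmem : p.getVert 0 ∈ H.neighborSet (p.getVert (j + 1)) := hadj.symm
    rw [neighborSet_getVert_eq_pair hdeg hp hlt] at hmem
    obtain h | h := hmem <;> have := hinj (by lia) (by lia) h <;> lia
  · have hmem : p.getVert j ∈ H.neighborSet (p.getVert (i + 1)) := hadj
    rw [neighborSet_getVert_eq_pair hdeg hp (by lia)] at hmem
    obtain h | h := hmem <;> have := hinj (by lia) (by lia) h <;> lia

lemma adj_getVert_iff (hdeg : ∀ v, (H.neighborSet v).encard ≤ 2) {u v : W}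
    {p : H.Walk u v} (hp : p.IsPath) {i j : ℕ} (hij : i < j) (hj : j ≤ p.length) :
    H.Adj (p.getVert i) (p.getVert j) ↔ j = i + 1 ∨ H.Adj u v ∧ i = 0 ∧ j = p.length := by
  constructor
  · intro hadj
    refine (eq_add_one_or_endpoints_of_adj_getVert hdeg hp hij hj hadj).imp_right ?_
    rintro ⟨rfl, rfl⟩
    exact ⟨by simpa using hadj, rfl, rfl⟩
  · rintro (rfl | ⟨hadj, rfl, rfl⟩)
    · exact p.adj_getVert_succ hj
    · simpa using hadj

lemma cycleGraph_adj_iff_of_lt {n : ℕ} {i j : Fin n} (hij : i < j) :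
    (SimpleGraph.cycleGraph n).Adj i j ↔ (j : ℕ) = i + 1 ∨ (i : ℕ) = 0 ∧ (j : ℕ) + 1 = n := by
  rw [SimpleGraph.cycleGraph_adj', Fin.coe_sub_iff_lt.mpr hij, Fin.coe_sub_iff_le.mpr hij.le]
  lia

lemma pathGraph_adj_iff_of_lt {n : ℕ} {i j : Fin n} (hij : i < j) :
    (SimpleGraph.pathGraph n).Adj i j ↔ (j : ℕ) = i + 1 := by
  rw [SimpleGraph.pathGraph_adj]
  lia

lemma adj_iff_adj_of_forall_lt {ι : Type*} [LinearOrder ι] {K : SimpleGraph ι} {f : ι → W}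
    (h : ∀ i j, i < j → (H.Adj (f i) (f j) ↔ K.Adj i j)) (i j : ι) :
    H.Adj (f i) (f j) ↔ K.Adj i j := by
  obtain hij | rfl | hij := lt_trichotomy i j
  · exact h i j hij
  · simp
  · rw [H.adj_comm, K.adj_comm, h j i hij]

theorem nonempty_iso_pathGraph_or_cycleGraph [Finite W] (hconn : H.Connected)
    (hdeg : ∀ v, (H.neighborSet v).encard ≤ 2) :
    (∃ n, Nonempty (H ≃g SimpleGraph.pathGraph n)) ∨
      ∃ n, 3 ≤ n ∧ Nonempty (H ≃g SimpleGraph.cycleGraph n) := by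
  obtain ⟨u, v, p, hp⟩ := exists_isHamiltonian hconn hdeg
  have hadj_iff {i j : Fin p.support.length} (hij : i < j) :
      H.Adj (hp.getVertEquiv i) (hp.getVertEquiv j) ↔
        (j : ℕ) = i + 1 ∨ H.Adj u v ∧ (i : ℕ) = 0 ∧ (j : ℕ) + 1 = p.support.length := by
    have hlen := p.length_support
    have hiff := adj_getVert_iff hdeg hp.isPath hij (by lia)
    simpa [hlen] using hiff
  by_cases hends : H.Adj u v ∧ 3 ≤ p.support.length
  · refine .inr ⟨_, hends.2, ⟨(RelIso.mk hp.getVertEquiv (@fun i j ↦ ?_)).symm⟩⟩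
    refine adj_iff_adj_of_forall_lt (fun i j hij ↦ ?_) i j
    rw [hadj_iff hij, cycleGraph_adj_iff_of_lt hij]
    simp [hends.1]
  · refine .inl ⟨_, ⟨(RelIso.mk hp.getVertEquiv (@fun i j ↦ ?_)).symm⟩⟩
    refine adj_iff_adj_of_forall_lt (fun i j hij ↦ ?_) i j
    rw [hadj_iff hij, pathGraph_adj_iff_of_lt hij]
    grind

end MaxDegreeTwo

section IsolatingSets

variable {W : Type*} {H : SimpleGraph W}

lemma IsIsolatingSet.image_iso {X : Type*} {K : SimpleGraph X} {T : Set W}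
    (hT : IsIsolatingSet H T) (e : H ≃g K) : IsIsolatingSet K (e '' T) := by
  have hmem {x : X} (hx : e.symm x ∈ closedNbhd H T) : x ∈ closedNbhd K (e '' T) := by
    obtain hx | ⟨y, hy, hadj⟩ := hx
    · exact .inl ⟨_, hx, e.apply_symm_apply x⟩
    · refine .inr ⟨e y, Set.mem_image_of_mem e hy, ?_⟩
      simpa using e.map_adj_iff.mpr hadj
  exact fun x y hxy ↦ (hT _ _ (e.symm.map_adj_iff.mpr hxy)).imp hmem hmem

lemma isIsolatingSet_of_forall_lt [LinearOrder W] {T : Set W}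
    (h : ∀ i j, i < j → H.Adj i j → i ∈ closedNbhd H T ∨ j ∈ closedNbhd H T) :
    IsIsolatingSet H T := by
  intro i j hadj
  obtain hij | hij := hadj.ne.lt_or_gt
  · exact h i j hij hadj
  · exact (h j i hij hadj.symm).symm

/-- One vertex out of each block of four consecutive vertices of `Fin n`: the one at offset `r`,
or the last vertex `n - 1` if the final block is too short. For `r = 2` this is an isolating set of
the path on `n` vertices, and for `r = 1` of the cycle. With `r = 2` a final block consisting of a
single vertex contributes nothing. -/
def everyFourth (n r : ℕ) : Set (Fin n) :=
  {i | ∃ k < (n + 4 - r) / 4, (i : ℕ) = min (4 * k + r) (n - 1)}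

lemma ncard_everyFourth_le (n r : ℕ) : (everyFourth n r).ncard ≤ (n + 4 - r) / 4 := by
  have hsub : Fin.val '' everyFourth n r ⊆
      (fun k ↦ min (4 * k + r) (n - 1)) '' Finset.range ((n + 4 - r) / 4) := by
    rintro _ ⟨i, ⟨k, hk, hi⟩, rfl⟩
    exact ⟨k, by simpa using hk, hi.symm⟩
  calc (everyFourth n r).ncard
      = (Fin.val '' everyFourth n r).ncard :=
        (Set.ncard_image_of_injective _ Fin.val_injective).symm
    _ ≤ _ := Set.ncard_le_ncard hsub
    _ ≤ _ := Set.ncard_image_le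
    _ = (n + 4 - r) / 4 := by rw [Set.ncard_coe_finset, Finset.card_range]

lemma mem_closedNbhd_everyFourth {n r : ℕ} {K : SimpleGraph (Fin n)}
    (hK : SimpleGraph.pathGraph n ≤ K) (hr : r = 1 ∨ r = 2) {i : Fin n}
    (hi : (i : ℕ) % 4 ≠ (r + 2) % 4) : i ∈ closedNbhd K (everyFourth n r) := by
  let m : Fin n := ⟨min (4 * (i / 4) + r) (n - 1), by lia⟩
  have hm : m ∈ everyFourth n r := ⟨i / 4, by lia, rfl⟩
  obtain heq | hadj : m = i ∨ (SimpleGraph.pathGraph n).Adj m i := by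
    rw [SimpleGraph.pathGraph_adj, Fin.ext_iff]
    simp only [m]
    lia
  · exact .inl (heq ▸ hm)
  · exact .inr ⟨m, hm, hK hadj⟩

lemma isIsolatingSet_pathGraph_everyFourth (n : ℕ) :
    IsIsolatingSet (SimpleGraph.pathGraph n) (everyFourth n 2) := by
  refine isIsolatingSet_of_forall_lt fun i j hij hadj ↦ ?_
  rw [pathGraph_adj_iff_of_lt hij] at hadj
  by_cases hi : (i : ℕ) % 4 = 0
  · exact .inr (mem_closedNbhd_everyFourth le_rfl (.inr rfl) (by lia))
  · exact .inl (mem_closedNbhd_everyFourth le_rfl (.inr rfl) (by lia))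

lemma isIsolatingSet_cycleGraph_everyFourth (n : ℕ) :
    IsIsolatingSet (SimpleGraph.cycleGraph n) (everyFourth n 1) := by
  refine isIsolatingSet_of_forall_lt fun i j hij hadj ↦ ?_
  rw [cycleGraph_adj_iff_of_lt hij] at hadj
  have hle : SimpleGraph.pathGraph n ≤ SimpleGraph.cycleGraph n :=
    SimpleGraph.pathGraph_le_cycleGraph
  by_cases hi : (i : ℕ) % 4 = 3
  · exact .inr (mem_closedNbhd_everyFourth hle (.inl rfl) (by lia))
  · exact .inl (mem_closedNbhd_everyFourth hle (.inl rfl) (by lia))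

theorem exists_isIsolatingSet_three_mul_ncard_le [Finite W] (hconn : H.Connected)
    (hdeg : ∀ v, (H.neighborSet v).encard ≤ 2)
    (hK2 : ¬ Nonempty (H ≃g (⊤ : SimpleGraph (Fin 2))))
    (hC5 : ¬ Nonempty (H ≃g SimpleGraph.cycleGraph 5)) :
    ∃ T : Set W, IsIsolatingSet H T ∧ 3 * T.ncard ≤ Nat.card W := by
  have transfer {n : ℕ} {K : SimpleGraph (Fin n)} (e : H ≃g K) {T : Set (Fin n)}
      (hT : IsIsolatingSet K T) (hcard : 3 * T.ncard ≤ n) :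
      ∃ T : Set W, IsIsolatingSet H T ∧ 3 * T.ncard ≤ Nat.card W := by
    refine ⟨e.symm '' T, hT.image_iso e.symm, ?_⟩
    rwa [Set.ncard_image_of_injective _ e.symm.injective, Nat.card_congr e.toEquiv, Nat.card_fin]
  obtain ⟨n, ⟨e⟩⟩ | ⟨n, hn, ⟨e⟩⟩ := nonempty_iso_pathGraph_or_cycleGraph hconn hdeg
  · have hn : n ≠ 2 := by
      rintro rfl
      exact hK2 ⟨SimpleGraph.pathGraph_two_eq_top ▸ e⟩
    have := ncard_everyFourth_le n 2
    exact transfer e (isIsolatingSet_pathGraph_everyFourth n) (by lia)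
  · have hn5 : n ≠ 5 := by
      rintro rfl
      exact hC5 ⟨e⟩
    have := ncard_everyFourth_le n 1
    exact transfer e (isIsolatingSet_cycleGraph_everyFourth n) (by lia)

end IsolatingSets

section Colors

variable {V : Type*} {G : SimpleGraph V} {D E C : Set V} {u v : V}

lemma closedNbhd_mono (hDE : D ⊆ E) : closedNbhd G D ⊆ closedNbhd G E := by
  rintro v (hv | ⟨u, hu, hadj⟩)
  · exact .inl (hDE hv)
  · exact .inr ⟨u, hDE hu, hadj⟩

lemma closedNbhd_union : closedNbhd G (D ∪ E) = closedNbhd G D ∪ closedNbhd G E := by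
  ext v
  simp only [closedNbhd, Set.mem_union, Set.mem_ofPred_eq]
  grind

lemma val_mem_closedNbhd_of_mem_closedNbhd_induce {S : Set C} {x : C}
    (hx : x ∈ closedNbhd (G.induce C) S) : (x : V) ∈ closedNbhd G (Subtype.val '' S) := by
  obtain hx | ⟨y, hy, hadj⟩ := hx
  · exact .inl ⟨x, hx, rfl⟩
  · exact .inr ⟨y, ⟨y, hy, rfl⟩, hadj⟩

lemma IsWhite.of_superset (hDE : D ⊆ E) (hv : IsWhite G E v) : IsWhite G D v := by
  obtain ⟨hvE, u, hadj, huE⟩ := hv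
  exact ⟨fun h ↦ hvE (closedNbhd_mono hDE h), u, hadj, fun h ↦ huE (closedNbhd_mono hDE h)⟩

lemma IsWhite.of_adj (hu : IsWhite G D u) (hadj : G.Adj u v) (hv : v ∉ closedNbhd G D) :
    IsWhite G D v :=
  ⟨hv, u, hadj.symm, hu.1⟩

lemma isBlue_iff_exists_adj_isWhite (hv : ¬ IsWhite G D v) :
    IsBlue G D v ↔ ∃ u, G.Adj v u ∧ IsWhite G D u := by
  refine ⟨And.right, fun ⟨u, hadj, hu⟩ ↦ ⟨?_, u, hadj, hu⟩⟩
  by_contra hvD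
  exact hv (hu.of_adj hadj.symm hvD)

lemma IsWhiteComponent.notMem_closedNbhd {A : Set V} (hC : IsWhiteComponent G D C) (hA : A ⊆ C)
    (hv : IsWhite G D v) (hvC : v ∉ C) : v ∉ closedNbhd G A := by
  rintro (hvA | ⟨u, hu, hadj⟩)
  · exact hvC (hA hvA)
  · exact hvC (hC.2.2 u (hA hu) v hv hadj)

lemma IsWhiteComponent.isWhite_union_iff {S : Set C} (hC : IsWhiteComponent G D C)
    (hS : IsIsolatingSet (G.induce C) S) :
    IsWhite G (D ∪ Subtype.val '' S) v ↔ IsWhite G D v ∧ v ∉ C := by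
  have hSC : Subtype.val '' S ⊆ C := Subtype.coe_image_subset C S
  constructor
  · refine fun hv ↦ ⟨hv.of_superset Set.subset_union_left, fun hvC ↦ ?_⟩
    obtain ⟨hvN, u, hadj, huN⟩ := hv
    rw [closedNbhd_union, Set.mem_union, not_or] at hvN huN
    have huC : u ∈ C := hC.2.2 v hvC u ((hC.1 hvC).of_adj hadj huN.1) hadj
    obtain hvS | huS := hS ⟨v, hvC⟩ ⟨u, huC⟩ hadj
    · exact hvN.2 (val_mem_closedNbhd_of_mem_closedNbhd_induce hvS)
    · exact huN.2 (val_mem_closedNbhd_of_mem_closedNbhd_induce huS)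
  · rintro ⟨hv, hvC⟩
    obtain ⟨u, hadj, huD⟩ := hv.2
    have hu : IsWhite G D u := hv.of_adj hadj huD
    have huC : u ∉ C := fun huC ↦ hvC (hC.2.2 u huC v hv hadj.symm)
    rw [IsWhite, closedNbhd_union]
    exact ⟨not_or.mpr ⟨hv.1, hC.notMem_closedNbhd hSC hv hvC⟩, u, hadj,
      not_or.mpr ⟨huD, hC.notMem_closedNbhd hSC hu huC⟩⟩

lemma resDegree_eq_whiteNbhdCount (hv : ¬ IsWhite G D v) :
    resDegree G D v = whiteNbhdCount G D v := by
  simp [resDegree, whiteNbhdCount, residualGraph, SimpleGraph.neighborSet, hv]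

lemma encard_neighborSet_induce_le [Finite V] (hC : C ⊆ {v | IsWhite G D v}) (x : C) :
    ((G.induce C).neighborSet x).encard ≤ whiteNbhdCount G D x := by
  rw [whiteNbhdCount, Set.Finite.cast_ncard_eq (Set.toFinite _),
    ← Subtype.val_injective.encard_image]
  refine Set.encard_le_encard ?_
  rintro _ ⟨y, hadj, rfl⟩
  exact ⟨hadj, hC y.2⟩

lemma whiteNbhdCount_eq_add [Finite V] (hC : C ⊆ {v | IsWhite G D v})
    (hE : ∀ v, IsWhite G E v ↔ IsWhite G D v ∧ v ∉ C) (v : V) :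
    whiteNbhdCount G D v = whiteNbhdCount G E v + {u ∈ C | G.Adj v u}.ncard := by
  rw [whiteNbhdCount, whiteNbhdCount, ← Set.ncard_union_eq]
  · congr 1
    ext u
    have hu : u ∈ C → IsWhite G D u := @hC u
    simp only [Set.mem_union, Set.mem_ofPred_eq, hE]
    tauto
  · rw [Set.disjoint_left]
    exact fun u hu huC ↦ ((hE u).mp hu.2).2 huC.1

lemma ncard_neighborSet_eq_whiteNbhdCount_add [Finite V] (v : V) :
    (G.neighborSet v).ncard =
      whiteNbhdCount G D v + {u ∈ {u | IsWhite G D u}ᶜ | G.Adj v u}.ncard := by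
  rw [whiteNbhdCount, ← Set.ncard_inter_add_ncard_sdiff_eq_ncard _ {u | IsWhite G D u}]
  congr 2
  ext u
  simp [and_comm]

end Colors

section Weights

/-- The weight of a non-white vertex with `d` white neighbors. Such a vertex is blue if `0 < d` and
red, of weight `0`, if `d = 0`. -/
noncomputable def blueWeight (β1 β2 β3 β4 : ℝ) : ℕ → ℝ
  | 0 => 0
  | 1 => β1
  | 2 => β2
  | 3 => β3
  | _ => β4

variable {V : Type*} {G : SimpleGraph V} {D E C : Set V} {ω β1 β2 β3 β4 : ℝ} {v : V}

lemma mul_le_blueWeight_sub_blueWeight {c d : ℕ} (hε₂ : β3 - β2 ≤ β2 - β1) (hε₁ : β3 - β2 ≤ β1)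
    (hcd : d + c ≤ 3) :
    c * (β3 - β2) ≤ blueWeight β1 β2 β3 β4 (d + c) - blueWeight β1 β2 β3 β4 d := by
  have hc : c ≤ 3 := by lia
  have hd : d ≤ 3 := by lia
  interval_cases c <;> interval_cases d <;> first | lia | (norm_num [blueWeight]; try linarith)

lemma vertexWeight_of_isWhite (hv : IsWhite G D v) : vertexWeight G D ω β1 β2 β3 β4 v = ω :=
  if_pos hv

lemma vertexWeight_of_not_isWhite [Finite V] (hv : ¬ IsWhite G D v) :
    vertexWeight G D ω β1 β2 β3 β4 v = blueWeight β1 β2 β3 β4 (whiteNbhdCount G D v) := by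
  have hblue : IsBlue G D v ↔ whiteNbhdCount G D v ≠ 0 := by
    rw [isBlue_iff_exists_adj_isWhite hv, whiteNbhdCount, ← Nat.pos_iff_ne_zero, Set.ncard_pos]
    rfl
  rw [vertexWeight, if_neg hv, resDegree_eq_whiteNbhdCount hv]
  simp only [hblue]
  generalize whiteNbhdCount G D v = d
  match d with
  | 0 | 1 | 2 | 3 | _ + 4 => simp [blueWeight]

lemma vertexWeight_sub_vertexWeight [Finite V] (hC : IsWhiteComponent G D C)
    (hE : ∀ v, IsWhite G E v ↔ IsWhite G D v ∧ v ∉ C) (v : V) :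
    vertexWeight G D ω β1 β2 β3 β4 v - vertexWeight G E ω β1 β2 β3 β4 v =
      (if v ∈ C then ω else 0) +
        if v ∈ {v | IsWhite G D v}ᶜ then
          blueWeight β1 β2 β3 β4 (whiteNbhdCount G D v) -
            blueWeight β1 β2 β3 β4 (whiteNbhdCount G E v)
        else 0 := by
  by_cases hv : IsWhite G D v
  · rw [vertexWeight_of_isWhite hv]
    by_cases hvC : v ∈ C
    · have hcount : whiteNbhdCount G E v = 0 := by
        rw [whiteNbhdCount, Set.ncard_eq_zero, Set.eq_empty_iff_forall_notMem]
        rintro u ⟨hadj, hu⟩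
        rw [hE] at hu
        exact hu.2 (hC.2.2 v hvC u hu.1 hadj)
      rw [vertexWeight_of_not_isWhite (by simp [hE, hvC]), hcount]
      simp [hvC, hv, blueWeight]
    · rw [vertexWeight_of_isWhite ((hE v).mpr ⟨hv, hvC⟩)]
      simp [hvC, hv]
  · have hvC : v ∉ C := fun hvC ↦ hv (hC.1 hvC)
    rw [vertexWeight_of_not_isWhite hv, vertexWeight_of_not_isWhite (by simp [hE, hv])]
    simp [hvC, hv]

lemma totalWeight_sub_totalWeight [Fintype V] (hC : IsWhiteComponent G D C)
    (hE : ∀ v, IsWhite G E v ↔ IsWhite G D v ∧ v ∉ C) :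
    totalWeight G D ω β1 β2 β3 β4 - totalWeight G E ω β1 β2 β3 β4 =
      C.ncard * ω + ∑ v ∈ {v | IsWhite G D v}ᶜ.toFinset,
        (blueWeight β1 β2 β3 β4 (whiteNbhdCount G D v) -
          blueWeight β1 β2 β3 β4 (whiteNbhdCount G E v)) := by
  rw [totalWeight, totalWeight, ← Finset.sum_sub_distrib]
  simp_rw [vertexWeight_sub_vertexWeight hC hE, ← Set.mem_toFinset]
  rw [Finset.sum_add_distrib, Fintype.sum_ite_mem, Fintype.sum_ite_mem, Finset.sum_const,
    nsmul_eq_mul, Set.ncard_eq_toFinset_card']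

lemma sum_ncard_adj_comm (G : SimpleGraph V) (s t : Set V) [Fintype s] [Fintype t] :
    ∑ v ∈ s.toFinset, {u ∈ t | G.Adj v u}.ncard = ∑ u ∈ t.toFinset, {v ∈ s | G.Adj u v}.ncard := by
  convert Finset.sum_card_bipartiteAbove_eq_sum_card_bipartiteBelow
    (s := s.toFinset) (t := t.toFinset) G.Adj using 2 with v _ u _
  · rw [← Set.ncard_coe_finset, Finset.coe_bipartiteAbove]
    simp
  · rw [← Set.ncard_coe_finset, Finset.coe_bipartiteBelow]
    simp [G.adj_comm]

end Weights

section Component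

variable {V : Type*} {G : SimpleGraph V} {D E C : Set V} {β1 β2 β3 β4 : ℝ} {v : V}

lemma sub_two_le_ncard_adj_not_isWhite [Finite V] {δ : ℕ} (hmin : δ ≤ (G.neighborSet v).ncard)
    (hW : whiteNbhdCount G D v ≤ 2) :
    (δ : ℝ) - 2 ≤ {u ∈ {u | IsWhite G D u}ᶜ | G.Adj v u}.ncard := by
  have hsplit := ncard_neighborSet_eq_whiteNbhdCount_add (G := G) (D := D) v
  rw [sub_le_iff_le_add]
  exact_mod_cast (by lia : δ ≤ {u ∈ {u | IsWhite G D u}ᶜ | G.Adj v u}.ncard + 2)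

lemma ncard_adj_mul_le_blueWeight_sub [Finite V] (hε₂ : β3 - β2 ≤ β2 - β1) (hε₁ : β3 - β2 ≤ β1)
    (hC : C ⊆ {v | IsWhite G D v}) (hE : ∀ v, IsWhite G E v ↔ IsWhite G D v ∧ v ∉ C)
    (hv : ¬ IsWhite G D v)
    (hB : IsBlue G D v → ∀ u ∈ C, G.Adj v u → resDegree G D v ≤ 3) :
    {u ∈ C | G.Adj v u}.ncard * (β3 - β2) ≤
      blueWeight β1 β2 β3 β4 (whiteNbhdCount G D v) -
        blueWeight β1 β2 β3 β4 (whiteNbhdCount G E v) := by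
  have hcount := whiteNbhdCount_eq_add hC hE v
  obtain hempty | ⟨u, huC, hadj⟩ := {u ∈ C | G.Adj v u}.eq_empty_or_nonempty
  · simp [hcount, hempty]
  · have hblue : IsBlue G D v := (isBlue_iff_exists_adj_isWhite hv).mpr ⟨u, hadj, hC huC⟩
    have hle : whiteNbhdCount G D v ≤ 3 :=
      resDegree_eq_whiteNbhdCount hv ▸ hB hblue u huC hadj
    rw [hcount] at hle ⊢
    exact mul_le_blueWeight_sub_blueWeight hε₂ hε₁ hle

lemma ncard_mul_le_totalWeight_sub [Fintype V] {δ : ℕ} {ω : ℝ} (hβ : β2 ≤ β3)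
    (hε₂ : β3 - β2 ≤ β2 - β1) (hε₁ : β3 - β2 ≤ β1) (hC : IsWhiteComponent G D C)
    (hE : ∀ v, IsWhite G E v ↔ IsWhite G D v ∧ v ∉ C)
    (hmin : ∀ v ∈ C, δ ≤ (G.neighborSet v).ncard) (hW : ∀ v ∈ C, whiteNbhdCount G D v ≤ 2)
    (hB : ∀ v, IsBlue G D v → ∀ u ∈ C, G.Adj v u → resDegree G D v ≤ 3) :
    C.ncard * (ω + ((δ : ℝ) - 2) * (β3 - β2)) ≤
      totalWeight G D ω β1 β2 β3 β4 - totalWeight G E ω β1 β2 β3 β4 := by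
  let N : Set V := {v | IsWhite G D v}ᶜ
  calc C.ncard * (ω + ((δ : ℝ) - 2) * (β3 - β2))
      = C.ncard * ω + ∑ _u ∈ C.toFinset, ((δ : ℝ) - 2) * (β3 - β2) := by
        rw [Finset.sum_const, nsmul_eq_mul, ← Set.ncard_eq_toFinset_card', mul_add]
    _ ≤ C.ncard * ω + ∑ u ∈ C.toFinset, {v ∈ N | G.Adj u v}.ncard * (β3 - β2) := by
        gcongr with u hu
        rw [Set.mem_toFinset] at hu
        exact sub_two_le_ncard_adj_not_isWhite (hmin u hu) (hW u hu)
    _ = C.ncard * ω + ∑ v ∈ N.toFinset, {u ∈ C | G.Adj v u}.ncard * (β3 - β2) := by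
        rw [← Finset.sum_mul, ← Finset.sum_mul]
        exact_mod_cast congrArg (fun k : ℕ ↦ C.ncard * ω + k * (β3 - β2))
          (sum_ncard_adj_comm G C N)
    _ ≤ C.ncard * ω + ∑ v ∈ N.toFinset, (blueWeight β1 β2 β3 β4 (whiteNbhdCount G D v) -
          blueWeight β1 β2 β3 β4 (whiteNbhdCount G E v)) := by
        gcongr with v hv
        exact ncard_adj_mul_le_blueWeight_sub hε₂ hε₁ hC.1 hE (Set.mem_toFinset.mp hv) (hB v)
    _ = _ := (totalWeight_sub_totalWeight hC hE).symm

lemma IsWhiteComponent.three_mul_ncard_le [Finite V] (hC : IsWhiteComponent G D C)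
    (hW : ∀ v ∈ C, whiteNbhdCount G D v ≤ 2)
    (hK2 : ¬ Nonempty (G.induce C ≃g (⊤ : SimpleGraph (Fin 2))))
    (hC5 : ¬ Nonempty (G.induce C ≃g SimpleGraph.cycleGraph 5)) {S : Set C}
    (hSmin : ∀ T : Set C, IsIsolatingSet (G.induce C) T → S.ncard ≤ T.ncard) :
    3 * S.ncard ≤ C.ncard := by
  have hdeg (x : C) : ((G.induce C).neighborSet x).encard ≤ 2 :=
    (encard_neighborSet_induce_le hC.1 x).trans (by exact_mod_cast hW x x.2)
  obtain ⟨T, hT, hcard⟩ := exists_isIsolatingSet_three_mul_ncard_le hC.2.1 hdeg hK2 hC5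
  calc 3 * S.ncard ≤ 3 * T.ncard := Nat.mul_le_mul_left 3 (hSmin T hT)
    _ ≤ C.ncard := hcard

end Component

theorem minimum_isolating_set_of_component_desirable_general {V : Type*} [Fintype V]
    (G : SimpleGraph V) (D C : Set V) (hC : IsWhiteComponent G D C)
    (δ : ℕ) (hmin : ∀ v ∈ C, δ ≤ (G.neighborSet v).ncard)
    (ω β1 β2 β3 β4 : ℝ) (hβ : β2 ≤ β3) (hε₂ : β3 - β2 ≤ β2 - β1) (hε₁ : β3 - β2 ≤ β1)
    (hω : 1 / 3 ≤ ω + ((δ : ℝ) - 2) * (β3 - β2))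
    (hW : ∀ v ∈ C, whiteNbhdCount G D v ≤ 2)
    (hB : ∀ v, IsBlue G D v → ∀ u ∈ C, G.Adj v u → resDegree G D v ≤ 3)
    (hK2 : ¬ Nonempty (G.induce C ≃g (⊤ : SimpleGraph (Fin 2))))
    (hC5 : ¬ Nonempty (G.induce C ≃g SimpleGraph.cycleGraph 5))
    (S : Set C) (hS : IsIsolatingSet (G.induce C) S)
    (hSmin : ∀ T : Set C, IsIsolatingSet (G.induce C) T → S.ncard ≤ T.ncard) :
    Desirable G ω β1 β2 β3 β4 D (Subtype.val '' S) := by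
  have hcard : (3 * S.ncard : ℝ) ≤ C.ncard := by
    exact_mod_cast hC.three_mul_ncard_le hW hK2 hC5 hSmin
  refine ⟨?_, ?_⟩
  · rintro _ ⟨x, -, rfl⟩ hxD
    exact (hC.1 x.2).1 (.inl hxD)
  calc ((Subtype.val '' S).ncard : ℝ) = S.ncard := by
        rw [Set.ncard_image_of_injective _ Subtype.val_injective]
    _ ≤ C.ncard * (1 / 3) := by linarith
    _ ≤ C.ncard * (ω + ((δ : ℝ) - 2) * (β3 - β2)) := by gcongr
    _ ≤ _ := ncard_mul_le_totalWeight_sub hβ hε₂ hε₁ hC (fun _ ↦ hC.isWhite_union_iff hS)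
        hmin hW hB

/-- Claim 3: under the degree assumptions, if some white component `C` is neither
`K₂` nor `C₅`, then every minimum isolating set of the induced subgraph on `C`
is a `D`-desirable set. -/
theorem minimum_isolating_set_of_component_desirable (δ : ℕ) (hδ : 3 ≤ δ)
    {V : Type*} [Fintype V] (G : SimpleGraph V)
    (hmin : ∀ v : V, δ ≤ (G.neighborSet v).ncard) (D : Set V) (ω β1 β2 β3 β4 : ℝ)
    (hm1 : ω ≥ β4) (hm2 : β4 ≥ β3) (hm3 : β3 ≥ β2) (hm4 : β2 ≥ β1) (hm5 : β1 > 0)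
    (he1 : β4 - β3 ≤ β3 - β2) (he2 : β3 - β2 ≤ β2 - β1) (he3 : β2 - β1 ≤ β1)
    (hc3 : ω + ((δ : ℝ) - 2) * (β3 - β2) ≥ 1 / 3)
    (hW : ∀ v, IsWhite G D v → whiteNbhdCount G D v ≤ 2)
    (hB : ∀ v, IsBlue G D v → resDegree G D v ≤ 3)
    (C : Set V) (hC : IsWhiteComponent G D C)
    (hK2 : ¬ Nonempty (G.induce C ≃g (⊤ : SimpleGraph (Fin 2))))
    (hC5 : ¬ Nonempty (G.induce C ≃g SimpleGraph.cycleGraph 5)) :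
    ∀ S : Set ↥C, IsIsolatingSet (G.induce C) S →
      (∀ T : Set ↥C, IsIsolatingSet (G.induce C) T → S.ncard ≤ T.ncard) →
      Desirable G ω β1 β2 β3 β4 D (Subtype.val '' S) := by
  exact minimum_isolating_set_of_component_desirable_general G D C hC δ (fun v _ ↦ hmin v)
    ω β1 β2 β3 β4 hm3 he2 (he2.trans he3) hc3 (fun v hv ↦ hW v (hC.1 hv))
    (fun v hv _ _ _ ↦ hB v hv) hK2 hC5
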